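/- Let Γ be an artin algebra and (X, Y) a hereditary cotorsion pair in Γ-mod. Then X is contravariantly finite if and only if Y is covariantly finite. -/

import Mathlib

open CategoryTheory Limits Opposite

/-- The Ext group `Ext^n(X, Y)` in the category of `Γ`-modules. -/
noncomputable abbrev extGrp (Γ : Type) [Ring Γ] (n : ℕ) (X Y : ModuleCat Γ) : ModuleCat ℤ :=
  ((Ext ℤ (ModuleCat Γ) n).obj (op X)).obj Y

/-- The class of finitely generated `Γ`-modules. -/
def fgMod (Γ : Type) [Ring Γ] : Set (ModuleCat Γ) := {M | Module.Finite Γ M}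

/-- A resolving subcategory of the category of finitely generated `Γ`-modules:
it consists of finitely generated modules, is closed under isomorphisms, contains all
(finitely generated) projective modules, and is closed under extensions, direct summands
and kernels of epimorphisms. -/
structure IsResolving (Γ : Type) [Ring Γ] (𝒳 : Set (ModuleCat Γ)) : Prop where
  subset_fg : 𝒳 ⊆ fgMod Γ
  iso_closed : ∀ M N : ModuleCat Γ, Nonempty (M ≅ N) → M ∈ 𝒳 → N ∈ 𝒳
  proj_mem : ∀ M : ModuleCat Γ, M ∈ fgMod Γ → Projective M → M ∈ 𝒳
  ext_closed : ∀ S : ShortComplex (ModuleCat Γ), S.ShortExact →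
    S.X₁ ∈ 𝒳 → S.X₃ ∈ 𝒳 → S.X₂ ∈ 𝒳
  summand_closed : ∀ M N : ModuleCat Γ, (M ⊞ N) ∈ 𝒳 → M ∈ 𝒳
  ker_epi_closed : ∀ S : ShortComplex (ModuleCat Γ), S.ShortExact →
    S.X₂ ∈ 𝒳 → S.X₃ ∈ 𝒳 → S.X₁ ∈ 𝒳

/-- A coresolving subcategory: consists of finitely generated modules, closed under
isomorphisms, contains all (finitely generated) injective modules, and is closed under
extensions, direct summands and cokernels of monomorphisms. -/
structure IsCoresolving (Γ : Type) [Ring Γ] (𝒴 : Set (ModuleCat Γ)) : Prop where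
  subset_fg : 𝒴 ⊆ fgMod Γ
  iso_closed : ∀ M N : ModuleCat Γ, Nonempty (M ≅ N) → M ∈ 𝒴 → N ∈ 𝒴
  inj_mem : ∀ M : ModuleCat Γ, M ∈ fgMod Γ → Injective M → M ∈ 𝒴
  ext_closed : ∀ S : ShortComplex (ModuleCat Γ), S.ShortExact →
    S.X₁ ∈ 𝒴 → S.X₃ ∈ 𝒴 → S.X₂ ∈ 𝒴
  summand_closed : ∀ M N : ModuleCat Γ, (M ⊞ N) ∈ 𝒴 → M ∈ 𝒴
  coker_mono_closed : ∀ S : ShortComplex (ModuleCat Γ), S.ShortExact →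
    S.X₁ ∈ 𝒴 → S.X₂ ∈ 𝒴 → S.X₃ ∈ 𝒴

/-- The right perpendicular category `𝒳^⊥ = ∩_{i ≥ 1} ker Ext^i(𝒳, −)`
inside the finitely generated modules. -/
def rightPerp (Γ : Type) [Ring Γ] (𝒳 : Set (ModuleCat Γ)) : Set (ModuleCat Γ) :=
  {M | M ∈ fgMod Γ ∧ ∀ X ∈ 𝒳, ∀ i : ℕ, 1 ≤ i → Subsingleton (extGrp Γ i X M)}

/-- The left perpendicular category `^⊥𝒴 = ∩_{i ≥ 1} ker Ext^i(−, 𝒴)`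
inside the finitely generated modules. -/
def leftPerp (Γ : Type) [Ring Γ] (𝒴 : Set (ModuleCat Γ)) : Set (ModuleCat Γ) :=
  {M | M ∈ fgMod Γ ∧ ∀ Y ∈ 𝒴, ∀ i : ℕ, 1 ≤ i → Subsingleton (extGrp Γ i M Y)}

/-- A pair `(𝒳, 𝒴)` of classes of finitely generated `Γ`-modules is a cotorsion pair if
`𝒳 = ker Ext¹(−, 𝒴)` and `𝒴 = ker Ext¹(𝒳, −)` (within finitely generated modules). -/
structure IsCotorsionPair (Γ : Type) [Ring Γ] (𝒳 𝒴 : Set (ModuleCat Γ)) : Prop where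
  left_eq : 𝒳 = {M | M ∈ fgMod Γ ∧ ∀ Y ∈ 𝒴, Subsingleton (extGrp Γ 1 M Y)}
  right_eq : 𝒴 = {M | M ∈ fgMod Γ ∧ ∀ X ∈ 𝒳, Subsingleton (extGrp Γ 1 X M)}

/-- A cotorsion pair `(𝒳, 𝒴)` is hereditary if `Ext^i(X, Y) = 0` for all `i ≥ 1`,
`X ∈ 𝒳`, `Y ∈ 𝒴`. -/
def IsHereditaryPair (Γ : Type) [Ring Γ] (𝒳 𝒴 : Set (ModuleCat Γ)) : Prop :=
  ∀ X ∈ 𝒳, ∀ Y ∈ 𝒴, ∀ i : ℕ, 1 ≤ i → Subsingleton (extGrp Γ i X Y)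

/-- `f : C ⟶ M` is a right `𝒞`-approximation of `M`. -/
def IsRightApprox {𝒜 : Type*} [Category 𝒜] (𝒞 : Set 𝒜) {C M : 𝒜} (f : C ⟶ M) : Prop :=
  C ∈ 𝒞 ∧ ∀ C' ∈ 𝒞, ∀ g : C' ⟶ M, ∃ h : C' ⟶ C, h ≫ f = g

/-- `f : M ⟶ C` is a left `𝒞`-approximation of `M`. -/
def IsLeftApprox {𝒜 : Type*} [Category 𝒜] (𝒞 : Set 𝒜) {M C : 𝒜} (f : M ⟶ C) : Prop :=
  C ∈ 𝒞 ∧ ∀ C' ∈ 𝒞, ∀ g : M ⟶ C', ∃ h : C ⟶ C', f ≫ h = g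

/-!
A right minimal `𝒳`-approximation of a module is surjective because projectives lie in `𝒳`, and by
Wakamatsu's lemma its kernel is right orthogonal to `𝒳`, hence lies in `𝒴`. Applying this to the
cokernel of an embedding of `M` into a finitely generated injective and pulling back (Salce's trick)
embeds `M` into an object of `𝒴` with cokernel in `𝒳`; such an embedding is a left
`𝒴`-approximation. Phrased in an abelian category, with `Ext¹ = 0` read as splitting of extensions,
the argument is self-dual, so the converse is the same statement in the opposite category.

Finitely generated injectives exist because an essential extension `E` of a finitely generated
module over an artin algebra is finitely generated: the socle of `E` lies in the submodule, each
further layer of the socle series embeds into a finite power of the previous one, and the series is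
finite because the Jacobson radical is nilpotent.
-/

section Abelian

variable {𝒜 : Type*} [Category 𝒜]

theorem IsLeftApprox.op {𝒞 : Set 𝒜} {M C : 𝒜} {f : M ⟶ C} (hf : IsLeftApprox 𝒞 f) :
    IsRightApprox 𝒞.op f.op :=
  ⟨hf.1, fun C' hC' g ↦
    let ⟨k, hk⟩ := hf.2 C'.unop hC' g.unop
    ⟨k.op, Quiver.Hom.unop_inj hk⟩⟩

theorem IsLeftApprox.unop {𝒞 : Set 𝒜} {C M : 𝒜ᵒᵖ} {f : M ⟶ C} (hf : IsLeftApprox 𝒞.op f) :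
    IsRightApprox 𝒞 f.unop :=
  ⟨hf.1, fun C' hC' g ↦
    let ⟨k, hk⟩ := hf.2 (.op C') hC' g.op
    ⟨k.unop, Quiver.Hom.op_inj hk⟩⟩

variable [Abelian 𝒜]

section ShortExact

theorem exists_shortExact_of_isPullback {S : ShortComplex 𝒜} (hS : S.ShortExact)
    {Q Z : 𝒜} {q₂ : Q ⟶ S.X₂} {q : Q ⟶ Z} {z : Z ⟶ S.X₃} (sq : IsPullback q₂ q S.g z) :
    ∃ (i : S.X₁ ⟶ Q) (w : i ≫ q = 0), i ≫ q₂ = S.f ∧ (ShortComplex.mk i q w).ShortExact := by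
  have := hS.mono_f
  have := hS.epi_g
  have w : S.f ≫ S.g = 0 ≫ z := by simp
  have hi : sq.lift S.f 0 w ≫ q₂ = S.f := sq.lift_fst _ _ _
  refine ⟨sq.lift S.f 0 w, sq.lift_snd _ _ _, hi, ?_⟩
  have : Mono (sq.lift S.f 0 w ≫ q₂) := by rw [hi]; infer_instance
  have : Mono (sq.lift S.f 0 w) := mono_of_mono _ q₂
  have : Epi q := Abelian.epi_snd_of_isLimit _ _ sq.isLimit
  exact
    { exact := ShortComplex.exact_of_f_is_kernel _ <|
        KernelFork.IsLimit.ofι' _ _ fun t ht ↦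
          have hk : (t ≫ q₂) ≫ S.g = 0 := by rw [Category.assoc, sq.w, reassoc_of% ht, zero_comp]
          ⟨hS.exact.lift (t ≫ q₂) hk, sq.hom_ext (by simp [hi]) (by simpa using ht.symm)⟩ }

theorem exists_shortExact_of_isPushout {S : ShortComplex 𝒜} (hS : S.ShortExact)
    {Q Z : 𝒜} {q₂ : S.X₂ ⟶ Q} {q : Z ⟶ Q} {z : S.X₁ ⟶ Z} (sq : IsPushout S.f z q₂ q) :
    ∃ (p : Q ⟶ S.X₃) (w : q ≫ p = 0), q₂ ≫ p = S.g ∧ (ShortComplex.mk q p w).ShortExact := by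
  obtain ⟨i, w, hi, h⟩ := exists_shortExact_of_isPullback hS.op sq.op.flip
  exact ⟨i.unop, Quiver.Hom.op_inj w, Quiver.Hom.op_inj hi, h.unop⟩

theorem shortExact_of_isPullback_f {S : ShortComplex 𝒜} (hS : S.ShortExact) {E' E : 𝒜}
    {a : E' ⟶ E} {b : E' ⟶ S.X₁} {p : E ⟶ S.X₂} [Epi p] (sq : IsPullback a b p S.f) :
    ∃ w : a ≫ p ≫ S.g = 0, (ShortComplex.mk a (p ≫ S.g) w).ShortExact := by
  have := hS.mono_f
  have := hS.epi_g
  have : Mono a := sq.mono_fst_of_mono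
  refine ⟨by rw [sq.w_assoc, S.zero, comp_zero], ?_⟩
  exact
    { exact := ShortComplex.exact_of_f_is_kernel _ <|
        KernelFork.IsLimit.ofι' _ _ fun t ht ↦
          have hk : (t ≫ p) ≫ S.g = 0 := by rw [Category.assoc, ht]
          ⟨sq.lift t (hS.exact.lift (t ≫ p) hk) (by simp), by simp⟩
      epi_g := epi_comp _ _ }

end ShortExact

/-- `Ext¹(X, Y) = 0` in the sense of Yoneda: every extension of `X` by `Y` splits. -/
def ExtOrthogonal (X Y : 𝒜) : Prop :=
  ∀ ⦃E : 𝒜⦄ (i : Y ⟶ E) (p : E ⟶ X) (w : i ≫ p = 0),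
    (ShortComplex.mk i p w).ShortExact → Nonempty (ShortComplex.mk i p w).Splitting

namespace ExtOrthogonal

variable {X Y : 𝒜}

theorem op (h : ExtOrthogonal X Y) : ExtOrthogonal (op Y) (op X) := fun _ i p w hS ↦
  (h p.unop i.unop (by rw [← unop_comp, w, unop_zero]) hS.unop).map ShortComplex.Splitting.op

theorem unop {X Y : 𝒜ᵒᵖ} (h : ExtOrthogonal X Y) : ExtOrthogonal (unop Y) (unop X) :=
  fun _ i p w hS ↦
    (h p.op i.op (by rw [← op_comp, w, op_zero]) hS.op).map ShortComplex.Splitting.unop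

theorem exists_lift {S : ShortComplex 𝒜} (hS : S.ShortExact) (h : ExtOrthogonal X S.X₁)
    (a : X ⟶ S.X₃) : ∃ b : X ⟶ S.X₂, b ≫ S.g = a := by
  have sq := IsPullback.of_hasPullback S.g a
  obtain ⟨i, w, -, hQ⟩ := exists_shortExact_of_isPullback hS sq
  obtain ⟨σ⟩ := h i _ w hQ
  exact ⟨σ.s ≫ pullback.fst _ _, by
    rw [Category.assoc, sq.w, ← Category.assoc, σ.s_g, Category.id_comp]⟩

theorem exists_extension {S : ShortComplex 𝒜} (hS : S.ShortExact) (h : ExtOrthogonal S.X₃ Y)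
    (a : S.X₁ ⟶ Y) : ∃ b : S.X₂ ⟶ Y, S.f ≫ b = a := by
  obtain ⟨b, hb⟩ := exists_lift hS.op h.op a.op
  exact ⟨b.unop, Quiver.Hom.op_inj hb⟩

theorem of_exists_retraction
    (h : ∀ ⦃E : 𝒜⦄ (i : Y ⟶ E) (p : E ⟶ X) (w : i ≫ p = 0),
      (ShortComplex.mk i p w).ShortExact → ∃ r : E ⟶ Y, i ≫ r = 𝟙 Y) : ExtOrthogonal X Y := by
  intro E i p w hS
  obtain ⟨r, hr⟩ := h i p w hS
  have := hS.epi_g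
  exact ⟨.ofExactOfRetraction _ hS.exact r hr this⟩

theorem of_projective [Projective X] : ExtOrthogonal X Y :=
  fun _ _ _ _ hS ↦ ⟨hS.splittingOfProjective⟩

theorem of_injective [Injective Y] : ExtOrthogonal X Y :=
  fun _ _ _ _ hS ↦ ⟨hS.splittingOfInjective⟩

theorem of_retract_right {Y' : 𝒜} (h : ExtOrthogonal X Y) (ρ : Retract Y' Y) :
    ExtOrthogonal X Y' :=
  of_exists_retraction fun _ _ _ _ hS ↦ by
    obtain ⟨b, hb⟩ := exists_extension hS h ρ.i
    exact ⟨b ≫ ρ.r, by rw [reassoc_of% hb, ρ.retract]⟩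

theorem of_retract_left {X' : 𝒜} (h : ExtOrthogonal X Y) (ρ : Retract X' X) :
    ExtOrthogonal X' Y :=
  (h.op.of_retract_right ρ.op).unop

theorem of_shortExact_left {S : ShortComplex 𝒜} (hS : S.ShortExact)
    (h₁ : ExtOrthogonal S.X₁ Y) (h₃ : ExtOrthogonal S.X₃ Y) : ExtOrthogonal S.X₂ Y :=
  of_exists_retraction fun E i p w hT ↦ by
    have := hT.epi_g
    have sq := IsPullback.of_hasPullback p S.f
    obtain ⟨j, w', (hj : j ≫ _ = i), hE'⟩ := exists_shortExact_of_isPullback hT sq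
    obtain ⟨_, hE⟩ := shortExact_of_isPullback_f hS sq
    obtain ⟨σ⟩ := h₁ j _ w' hE'
    obtain ⟨r, (hr : pullback.fst p S.f ≫ r = σ.r)⟩ := exists_extension hE h₃ σ.r
    exact ⟨r, by rw [← hj, Category.assoc, hr, σ.f_r]⟩

end ExtOrthogonal

section Approximation

theorem isIso_of_epi_of_isNoetherianObject {X : 𝒜} [IsNoetherianObject X] (f : X ⟶ X) [Epi f] :
    IsIso f := by
  let φ : End X := f
  have epi_pow (n : ℕ) : Epi (φ ^ n) := by
    induction n with
    | zero => exact inferInstanceAs (Epi (𝟙 X))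
    | succ n ih => rw [pow_succ']; exact epi_comp (φ ^ n) f
  have hker : Monotone fun n : ℕ ↦ kernelSubobject (φ ^ n) :=
    monotone_nat_of_le_succ fun n ↦ by
      simp only [pow_succ', End.mul_def]
      exact kernelSubobject_comp_le _ _
  obtain ⟨n, (hn : ∀ m, n ≤ m → kernelSubobject (φ ^ n) = kernelSubobject (φ ^ m))⟩ :=
    monotone_chain_condition_of_isNoetherianObject ⟨_, hker⟩
  have : Mono f := Preadditive.mono_of_cancel_zero f fun {Z} z hz ↦ by
    obtain ⟨Z', e, _, y, hy⟩ := surjective_up_to_refinements_of_epi (φ ^ n) z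
    have hy' : (kernelSubobject (φ ^ (n + 1))).Factors y := by
      rw [kernelSubobject_factors_iff, pow_succ', End.mul_def, ← reassoc_of% hy]
      exact (congrArg (e ≫ ·) hz).trans comp_zero
    rw [← hn (n + 1) n.le_succ, kernelSubobject_factors_iff] at hy'
    rw [← cancel_epi e, hy, hy', comp_zero]
  exact isIso_of_mono_of_epi f

/-- A morphism is right minimal if every endomorphism of its source that is compatible with it is
invertible. -/
def IsRightMinimal {X M : 𝒜} (f : X ⟶ M) : Prop :=
  ∀ g : X ⟶ X, g ≫ f = f → IsIso g

theorem IsRightApprox.exists_isRightMinimal {𝒞 : Set 𝒜} {X M : 𝒜} [IsNoetherianObject X]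
    [IsArtinianObject X] (h𝒞 : ∀ A, Retract A X → A ∈ 𝒞) {f : X ⟶ M}
    (hf : IsRightApprox 𝒞 f) :
    ∃ (A : 𝒜) (g : A ⟶ M), IsRightApprox 𝒞 g ∧ IsRightMinimal g := by
  obtain ⟨B, ⟨e, he⟩, hB⟩ := wellFounded_lt.has_min
    {B : Subobject X | ∃ e : X ⟶ (B : 𝒜), e ≫ B.arrow ≫ f = f}
    ⟨⊤, inv (⊤ : Subobject X).arrow, by simp⟩
  have hmin : IsRightMinimal (B.arrow ≫ f) := by
    intro φ hφ
    have hmem : (e ≫ factorThruImage φ ≫ (Subobject.underlyingIso _).inv) ≫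
        (Subobject.mk (image.ι φ ≫ B.arrow)).arrow ≫ f = f := by
      simp [hφ, he]
    have : IsIso (image.ι φ) := by
      by_contra hφ'
      exact hB _ ⟨_, hmem⟩
        ((Subobject.mk_lt_mk_of_comm (image.ι φ) rfl hφ').trans_eq (Subobject.mk_arrow B))
    have : Epi φ := epi_of_epi_image φ
    have := isNoetherianObject_of_mono B.arrow
    exact isIso_of_epi_of_isNoetherianObject φ
  have : IsIso (B.arrow ≫ e) := hmin _ (by simp [he])
  exact ⟨B, B.arrow ≫ f, ⟨h𝒞 B ⟨B.arrow, e ≫ inv (B.arrow ≫ e), by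
      rw [← Category.assoc, IsIso.hom_inv_id]⟩, fun C' hC' g ↦
    let ⟨k, hk⟩ := hf.2 C' hC' g
    ⟨k ≫ e, by simp [he, hk]⟩⟩, hmin⟩

/-- Wakamatsu's lemma. -/
theorem IsRightMinimal.extOrthogonal_of_isRightApprox {𝒳 : Set 𝒜}
    (h𝒳 : ∀ T : ShortComplex 𝒜, T.ShortExact → T.X₁ ∈ 𝒳 → T.X₃ ∈ 𝒳 → T.X₂ ∈ 𝒳)
    {S : ShortComplex 𝒜} (hS : S.ShortExact) (happ : IsRightApprox 𝒳 S.g)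
    (hmin : IsRightMinimal S.g) {X : 𝒜} (hX : X ∈ 𝒳) : ExtOrthogonal X S.X₁ :=
  .of_exists_retraction fun E i p w hT ↦ by
    have sq := IsPushout.of_hasPushout i S.f
    obtain ⟨_, _, -, hQ⟩ := exists_shortExact_of_isPushout hT sq
    obtain ⟨c, hc₀, hc⟩ : ∃ c : pushout i S.f ⟶ S.X₃,
        pushout.inl i S.f ≫ c = 0 ∧ pushout.inr i S.f ≫ c = S.g :=
      ⟨sq.desc 0 S.g (by simp), sq.inl_desc _ _ _, sq.inr_desc _ _ _⟩
    obtain ⟨h, hh⟩ := happ.2 _ (h𝒳 _ hQ happ.1 hX) c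
    let φ : S.X₂ ⟶ S.X₂ := pushout.inr i S.f ≫ h
    have hφ : φ ≫ S.g = S.g := by simp [φ, hc, hh]
    have : IsIso φ := hmin φ hφ
    have hφ' : inv φ ≫ S.g = S.g := by rw [IsIso.inv_comp_eq, hφ]
    have hk : (pushout.inl i S.f ≫ h ≫ inv φ) ≫ S.g = 0 := by simp [hφ', hh, hc₀]
    have := hS.mono_f
    refine ⟨hS.exact.lift _ hk, ?_⟩
    rw [← cancel_mono S.f, Category.assoc, hS.exact.lift_f, sq.w_assoc, Category.id_comp,
      ← Category.assoc (pushout.inr i S.f), IsIso.hom_inv_id, Category.comp_id]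

end Approximation

section Opposite

variable {P : ObjectProperty 𝒜}

instance [P.IsClosedUnderExtensions] : P.op.IsClosedUnderExtensions where
  prop_X₂_of_shortExact hS h₁ h₃ := P.prop_X₂_of_shortExact hS.unop h₃ h₁

instance [P.IsClosedUnderQuotients] : P.op.IsClosedUnderSubobjects where
  prop_of_mono f _ h := P.prop_of_epi f.unop h

instance [P.IsClosedUnderSubobjects] : P.op.IsClosedUnderQuotients where
  prop_of_epi f _ h := P.prop_of_mono f.unop h

theorem op_le_isNoetherianObject (hP : P ≤ isArtinianObject) : P.op ≤ isNoetherianObject :=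
  fun X hX ↦
    have : WellFoundedLT (Subobject X.unop) := hP _ hX
    (wellFoundedLT_dual_iff (Subobject X)).1
      (Abelian.subobjectIsoSubobjectOp X.unop).symm.toOrderEmbedding.wellFoundedLT

theorem op_le_isArtinianObject (hP : P ≤ isNoetherianObject) : P.op ≤ isArtinianObject :=
  fun X hX ↦
    have : WellFoundedGT (Subobject X.unop) := hP _ hX
    (wellFoundedGT_dual_iff (Subobject X)).1
      (Abelian.subobjectIsoSubobjectOp X.unop).symm.toOrderEmbedding.wellFoundedGT

end Opposite

/-- The relative notion of a cotorsion pair: `𝒳` and `𝒴` are each other's `Ext¹`-orthogonal within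
the class of objects satisfying `P`. -/
structure IsExtOrthogonalPair (P : ObjectProperty 𝒜) (𝒳 𝒴 : Set 𝒜) : Prop where
  mem_left_iff : ∀ X, X ∈ 𝒳 ↔ P X ∧ ∀ Y ∈ 𝒴, ExtOrthogonal X Y
  mem_right_iff : ∀ Y, Y ∈ 𝒴 ↔ P Y ∧ ∀ X ∈ 𝒳, ExtOrthogonal X Y

namespace IsExtOrthogonalPair

variable {P : ObjectProperty 𝒜} {𝒳 𝒴 : Set 𝒜}

theorem op (h : IsExtOrthogonalPair P 𝒳 𝒴) : IsExtOrthogonalPair P.op 𝒴.op 𝒳.op where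
  mem_left_iff Y := (h.mem_right_iff Y.unop).trans <| and_congr Iff.rfl
    ⟨fun hY _ hX ↦ (hY _ hX).op, fun hY X hX ↦ (hY (.op X) hX).unop⟩
  mem_right_iff X := (h.mem_left_iff X.unop).trans <| and_congr Iff.rfl
    ⟨fun hX _ hY ↦ (hX _ hY).op, fun hX Y hY ↦ (hX (.op Y) hY).unop⟩

theorem extOrthogonal (h : IsExtOrthogonalPair P 𝒳 𝒴) {X Y : 𝒜} (hX : X ∈ 𝒳) (hY : Y ∈ 𝒴) :
    ExtOrthogonal X Y :=
  ((h.mem_left_iff X).1 hX).2 Y hY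

theorem mem_left_of_retract [P.IsClosedUnderSubobjects] (h : IsExtOrthogonalPair P 𝒳 𝒴) {A X : 𝒜}
    (ρ : Retract A X) (hX : X ∈ 𝒳) : A ∈ 𝒳 :=
  (h.mem_left_iff A).2 ⟨P.prop_of_mono ρ.i ((h.mem_left_iff X).1 hX).1,
    fun _ hY ↦ (h.extOrthogonal hX hY).of_retract_left ρ⟩

theorem mem_left_of_shortExact [P.IsClosedUnderExtensions] (h : IsExtOrthogonalPair P 𝒳 𝒴)
    {S : ShortComplex 𝒜} (hS : S.ShortExact) (h₁ : S.X₁ ∈ 𝒳) (h₃ : S.X₃ ∈ 𝒳) : S.X₂ ∈ 𝒳 :=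
  (h.mem_left_iff _).2
    ⟨P.prop_X₂_of_shortExact hS ((h.mem_left_iff _).1 h₁).1 ((h.mem_left_iff _).1 h₃).1,
    fun _ hY ↦ .of_shortExact_left hS (h.extOrthogonal h₁ hY) (h.extOrthogonal h₃ hY)⟩

theorem mem_right_of_shortExact [P.IsClosedUnderExtensions] (h : IsExtOrthogonalPair P 𝒳 𝒴)
    {S : ShortComplex 𝒜} (hS : S.ShortExact) (h₁ : S.X₁ ∈ 𝒴) (h₃ : S.X₃ ∈ 𝒴) : S.X₂ ∈ 𝒴 :=
  h.op.mem_left_of_shortExact hS.op h₃ h₁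

theorem exists_special_rightApprox [P.IsClosedUnderExtensions] [P.IsClosedUnderSubobjects]
    (h : IsExtOrthogonalPair P 𝒳 𝒴) (hN : P ≤ isNoetherianObject) (hA : P ≤ isArtinianObject)
    (hgen : ∀ M, P M → ∃ X ∈ 𝒳, ∃ π : X ⟶ M, Epi π) {M : 𝒜} (hM : P M)
    (happ : ∃ (X : 𝒜) (f : X ⟶ M), IsRightApprox 𝒳 f) :
    ∃ (Y X : 𝒜) (i : Y ⟶ X) (f : X ⟶ M) (w : i ≫ f = 0),
      (ShortComplex.mk i f w).ShortExact ∧ Y ∈ 𝒴 ∧ X ∈ 𝒳 := by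
  obtain ⟨X', f', hf'⟩ := happ
  have hX' : P X' := ((h.mem_left_iff X').1 hf'.1).1
  have : IsNoetherianObject X' := ⟨hN X' hX'⟩
  have : IsArtinianObject X' := ⟨hA X' hX'⟩
  obtain ⟨X, f, hf, hmin⟩ :=
    hf'.exists_isRightMinimal fun A ρ ↦ h.mem_left_of_retract ρ hf'.1
  obtain ⟨Z, hZ, π, _⟩ := hgen M hM
  obtain ⟨k, hk⟩ := hf.2 Z hZ π
  have : Epi f := epi_of_epi_fac hk
  have hS : (ShortComplex.mk (kernel.ι f) f (kernel.condition f)).ShortExact :=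
    { exact := ShortComplex.exact_kernel f }
  have hK : P (kernel f) := P.prop_of_mono (kernel.ι f) ((h.mem_left_iff X).1 hf.1).1
  refine ⟨_, X, _, f, _, hS, (h.mem_right_iff _).2 ⟨hK, fun T hT ↦ ?_⟩, hf.1⟩
  exact hmin.extOrthogonal_of_isRightApprox (fun _ ↦ h.mem_left_of_shortExact) hS hf hT

/-- Salce's lemma. -/
theorem exists_special_leftApprox [P.IsClosedUnderExtensions] [P.IsClosedUnderQuotients]
    (h : IsExtOrthogonalPair P 𝒳 𝒴) (hcogen : ∀ M, P M → ∃ Y ∈ 𝒴, ∃ ι : M ⟶ Y, Mono ι)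
    (H : ∀ M, P M → ∃ (Y X : 𝒜) (i : Y ⟶ X) (f : X ⟶ M) (w : i ≫ f = 0),
      (ShortComplex.mk i f w).ShortExact ∧ Y ∈ 𝒴 ∧ X ∈ 𝒳) {M : 𝒜} (hM : P M) :
    ∃ (Y X : 𝒜) (f : M ⟶ Y) (p : Y ⟶ X) (w : f ≫ p = 0),
      (ShortComplex.mk f p w).ShortExact ∧ Y ∈ 𝒴 ∧ X ∈ 𝒳 := by
  obtain ⟨I, hI, ι, _⟩ := hcogen M hM
  have hS : (ShortComplex.mk ι (cokernel.π ι) (cokernel.condition ι)).ShortExact :=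
    { exact := ShortComplex.exact_cokernel ι }
  have hC : P (cokernel ι) := P.prop_of_epi (cokernel.π ι) ((h.mem_right_iff I).1 hI).1
  obtain ⟨K, X, i, f, w, hT, hK, hX⟩ := H _ hC
  have sq := IsPullback.of_hasPullback (cokernel.π ι) f
  obtain ⟨_, _, -, hQX⟩ := exists_shortExact_of_isPullback hS sq
  obtain ⟨_, _, -, hQI⟩ := exists_shortExact_of_isPullback hT sq.flip
  exact ⟨_, X, _, _, _, hQX, h.mem_right_of_shortExact hQI hK hI, hX⟩

theorem exists_isLeftApprox [P.IsClosedUnderExtensions] [P.IsClosedUnderSubobjects]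
    [P.IsClosedUnderQuotients] (h : IsExtOrthogonalPair P 𝒳 𝒴) (hN : P ≤ isNoetherianObject)
    (hA : P ≤ isArtinianObject) (hgen : ∀ M, P M → ∃ X ∈ 𝒳, ∃ π : X ⟶ M, Epi π)
    (hcogen : ∀ M, P M → ∃ Y ∈ 𝒴, ∃ ι : M ⟶ Y, Mono ι)
    (H : ∀ M, P M → ∃ (X : 𝒜) (f : X ⟶ M), IsRightApprox 𝒳 f) {M : 𝒜} (hM : P M) :
    ∃ (Y : 𝒜) (f : M ⟶ Y), IsLeftApprox 𝒴 f := by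
  obtain ⟨Y, X, f, p, w, hS, hY, hX⟩ := h.exists_special_leftApprox hcogen
    (fun C hC ↦ h.exists_special_rightApprox hN hA hgen hC (H C hC)) hM
  exact ⟨Y, f, hY, fun _ hY' ↦ (h.extOrthogonal hX hY').exists_extension hS⟩

theorem exists_isRightApprox [P.IsClosedUnderExtensions] [P.IsClosedUnderSubobjects]
    [P.IsClosedUnderQuotients] (h : IsExtOrthogonalPair P 𝒳 𝒴) (hN : P ≤ isNoetherianObject)
    (hA : P ≤ isArtinianObject) (hgen : ∀ M, P M → ∃ X ∈ 𝒳, ∃ π : X ⟶ M, Epi π)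
    (hcogen : ∀ M, P M → ∃ Y ∈ 𝒴, ∃ ι : M ⟶ Y, Mono ι)
    (H : ∀ M, P M → ∃ (Y : 𝒜) (f : M ⟶ Y), IsLeftApprox 𝒴 f) {M : 𝒜} (hM : P M) :
    ∃ (X : 𝒜) (f : X ⟶ M), IsRightApprox 𝒳 f := by
  have hgen' : ∀ M, P.op M → ∃ Y ∈ 𝒴.op, ∃ π : Y ⟶ M, Epi π := fun M hM ↦
    let ⟨Y, hY, ι, _⟩ := hcogen M.unop hM
    ⟨.op Y, hY, ι.op, inferInstance⟩
  have hcogen' : ∀ M, P.op M → ∃ X ∈ 𝒳.op, ∃ ι : M ⟶ X, Mono ι := fun M hM ↦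
    let ⟨X, hX, π, _⟩ := hgen M.unop hM
    ⟨.op X, hX, π.op, inferInstance⟩
  have H' : ∀ M, P.op M → ∃ (Y : 𝒜ᵒᵖ) (f : Y ⟶ M), IsRightApprox 𝒴.op f := fun M hM ↦
    let ⟨Y, f, hf⟩ := H M.unop hM
    ⟨.op Y, f.op, hf.op⟩
  obtain ⟨X, f, hf⟩ := h.op.exists_isLeftApprox (op_le_isNoetherianObject hA)
    (op_le_isArtinianObject hN) hgen' hcogen' H' (M := .op M) hM
  exact ⟨X.unop, f.unop, hf.unop⟩

end IsExtOrthogonalPair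

section Ext

theorem extOrthogonal_iff_of_exact {P₂ P₁ P₀ X Y : 𝒜} [Projective P₀] {d₂ : P₂ ⟶ P₁}
    {d₁ : P₁ ⟶ P₀} {π : P₀ ⟶ X} [Epi π] {w₁ : d₂ ≫ d₁ = 0} {w₀ : d₁ ≫ π = 0}
    (h₁ : (ShortComplex.mk d₂ d₁ w₁).Exact) (h₀ : (ShortComplex.mk d₁ π w₀).Exact) :
    ExtOrthogonal X Y ↔ ∀ g : P₁ ⟶ Y, d₂ ≫ g = 0 → ∃ h : P₀ ⟶ Y, d₁ ≫ h = g := by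
  refine ⟨fun hXY g hg ↦ ?_, fun H E i p w hS ↦ ?_⟩
  · let e : P₁ ⟶ kernel π := kernel.lift π d₁ w₀
    have he : e ≫ kernel.ι π = d₁ := kernel.lift_ι _ _ _
    have : Epi e := (ShortComplex.mk d₁ π w₀).exact_iff_epi_kernel_lift.1 h₀
    have w : d₂ ≫ e = 0 := by rw [← cancel_mono (kernel.ι π), Category.assoc, he, w₁, zero_comp]
    have hd₂e : (ShortComplex.mk d₂ e w).Exact :=
      (ShortComplex.exact_iff_of_epi_of_isIso_of_mono
        (S₁ := .mk d₂ e w) (S₂ := .mk d₂ d₁ w₁) ⟨𝟙 _, 𝟙 _, kernel.ι π, by simp, by simp [he]⟩).2 h₁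
    have hK : (ShortComplex.mk (kernel.ι π) π (kernel.condition π)).ShortExact :=
      { exact := ShortComplex.exact_kernel π }
    obtain ⟨h, hh⟩ := hXY.exists_extension hK (hd₂e.desc g hg)
    exact ⟨h, by rw [← he, Category.assoc, hh]; exact hd₂e.g_desc g hg⟩
  · have := hS.mono_f
    have := hS.epi_g
    let φ : P₀ ⟶ E := Projective.factorThru π p
    have hφ : φ ≫ p = π := Projective.factorThru_comp π p
    let g : P₁ ⟶ Y := hS.exact.lift (d₁ ≫ φ) (by rw [Category.assoc, hφ, w₀])
    have hg : g ≫ i = d₁ ≫ φ := hS.exact.lift_f _ _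
    obtain ⟨h, hh⟩ := H g <| by
      rw [← cancel_mono i, Category.assoc, hg, reassoc_of% w₁, zero_comp, zero_comp]
    let s : X ⟶ E := h₀.desc (φ - h ≫ i) (by simp [reassoc_of% hh, hg])
    have hs : π ≫ s = φ - h ≫ i := h₀.g_desc _ _
    exact ⟨.ofExactOfSection _ hS.exact s
      (by rw [← cancel_epi π, reassoc_of% hs, Preadditive.sub_comp, Category.assoc, w]; simp [hφ])
      hS.mono_f⟩

theorem subsingleton_ext_one_iff_extOrthogonal (R : Type*) [Ring R] [Linear R 𝒜]
    [EnoughProjectives 𝒜] (X Y : 𝒜) :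
    Subsingleton (((Ext R 𝒜 1).obj (op X)).obj Y) ↔ ExtOrthogonal X Y := by
  let P := projectiveResolution X
  obtain ⟨π, _, w₀, h₀⟩ : ∃ (π : P.complex.X 0 ⟶ X) (_ : Epi π) (w₀ : P.complex.d 1 0 ≫ π = 0),
      (ShortComplex.mk _ π w₀).Exact :=
    ⟨P.π.f 0, inferInstanceAs (Epi (P.π.f 0)), _, P.exact₀⟩
  refine Iff.trans ?_ (extOrthogonal_iff_of_exact (P.exact_succ 0) h₀).symm
  rw [← ModuleCat.isZero_iff_subsingleton, (P.isoExt (R := R) 1 Y).isZero_iff,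
    ← HomologicalComplex.exactAt_iff_isZero_homology,
    HomologicalComplex.exactAt_iff' _ 0 1 2 (by simp) (by simp), ShortComplex.moduleCat_exact_iff]
  rfl

end Ext

end Abelian

section EssentialSubmodule

variable {Γ E : Type*} [Ring Γ] [AddCommGroup E] [Module Γ E]

/-- A submodule `L` of `E` is essential if it meets every nonzero submodule nontrivially. -/
def IsEssentialSubmodule (L : Submodule Γ E) : Prop :=
  ∀ ⦃N : Submodule Γ E⦄, Disjoint L N → N = ⊥

theorem exists_disjoint_isEssentialSubmodule_map_mkQ (L : Submodule Γ E) :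
    ∃ C : Submodule Γ E, Disjoint L C ∧ IsEssentialSubmodule (L.map C.mkQ) := by
  obtain ⟨C, -, hC⟩ := zorn_le_nonempty₀ {C : Submodule Γ E | Disjoint L C}
    (fun c hc hchain _ _ ↦ ⟨sSup c, hchain.directedOn.disjoint_sSup_right.2 fun _ h ↦ hc h,
      fun _ ↦ le_sSup⟩) ⊥ disjoint_bot_right
  refine ⟨C, hC.prop, fun N hN ↦ ?_⟩
  have hdisj : Disjoint L (N.comap C.mkQ) := by
    rw [Submodule.disjoint_def] at hN ⊢
    intro x hxL hxN
    have hxC : x ∈ C := by simpa using hN _ (Submodule.mem_map_of_mem hxL) hxN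
    exact Submodule.disjoint_def.1 hC.prop x hxL hxC
  have hle : N.comap C.mkQ ≤ C := hC.le_of_ge hdisj <|
    (Submodule.ker_mkQ C).ge.trans (Submodule.comap_mono bot_le)
  rw [← Submodule.map_comap_eq_of_surjective C.mkQ_surjective N]
  exact LinearMap.le_ker_iff_map.1 (hle.trans (Submodule.ker_mkQ C).ge)

namespace IsEssentialSubmodule

variable {L : Submodule Γ E}

theorem le_of_isSemisimpleModule (hL : IsEssentialSubmodule L) (S : Submodule Γ E)
    [IsSemisimpleModule Γ S] : S ≤ L := by
  obtain ⟨N, hN⟩ := exists_isCompl (L.comap S.subtype)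
  have hdisj : Disjoint L (N.map S.subtype) := by
    rw [Submodule.disjoint_def]
    rintro _ hxL ⟨x, hxN, rfl⟩
    exact congrArg S.subtype (Submodule.disjoint_def.1 hN.disjoint x hxL hxN)
  have hN₀ : N = ⊥ := Submodule.map_injective_of_injective S.subtype_injective
    ((hL hdisj).trans (Submodule.map_bot _).symm)
  have htop : L.comap S.subtype = ⊤ := by simpa [hN₀] using hN.sup_eq_top
  exact Submodule.comap_subtype_eq_top.1 htop

theorem injective_quotient [Module.Injective Γ E] {C : Submodule Γ E} (hLC : Disjoint L C)
    [IsArtinian Γ (E ⧸ C)] (hL : IsEssentialSubmodule (L.map C.mkQ)) :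
    Module.Injective Γ (E ⧸ C) := by
  have hinj : Function.Injective (C.mkQ ∘ₗ L.subtype) := by
    rw [← LinearMap.ker_eq_bot, LinearMap.ker_comp, Submodule.ker_mkQ]
    exact Submodule.disjoint_iff_comap_eq_bot.1 hLC
  obtain ⟨k, hk⟩ := Module.Injective.out (C.mkQ ∘ₗ L.subtype) hinj L.subtype
  have hmk : Function.Injective (C.mkQ ∘ₗ k) := by
    refine LinearMap.ker_eq_bot.1 (hL (Submodule.disjoint_def.2 ?_))
    rintro _ ⟨x, hx, rfl⟩ (hx₀ : C.mkQ (k (C.mkQ x)) = 0)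
    rwa [show k (C.mkQ x) = x from hk ⟨x, hx⟩] at hx₀
  let e := LinearEquiv.ofBijective _ (IsArtinian.bijective_of_injective_endomorphism _ hmk)
  refine ⟨fun X Y _ _ _ _ f hf g ↦ ?_⟩
  obtain ⟨h, hh⟩ := Module.Injective.out f hf (k ∘ₗ g)
  exact ⟨e.symm ∘ₗ C.mkQ ∘ₗ h, fun x ↦ e.symm_apply_eq.2 (congrArg C.mkQ (hh x))⟩

end IsEssentialSubmodule

theorem isSemisimpleModule_span_singleton [IsSemisimpleRing (Γ ⧸ Ring.jacobson Γ)] {x : E}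
    (hx : ∀ a ∈ Ring.jacobson Γ, a • x = 0) : IsSemisimpleModule Γ (Submodule.span Γ {x}) := by
  have htors : Module.IsTorsionBySet Γ (Submodule.span Γ {x}) (Ring.jacobson Γ : Set Γ) := by
    rintro ⟨y, hy⟩ ⟨a, ha⟩
    obtain ⟨b, rfl⟩ := Submodule.mem_span_singleton.1 hy
    exact Subtype.ext <| by
      simpa [mul_smul] using hx _ (Ideal.mul_mem_right b _ ha)
  rw [← htors.isSemisimpleModule_iff]
  let := htors.module
  infer_instance

theorem isNoetherian_of_pow_smul_eq_bot {R : Type*} [CommRing R] [Algebra R Γ] [Module R E]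
    [IsScalarTower R Γ E] {I : Ideal Γ} (hI : I.FG) {A : Submodule R E} [IsNoetherian R A]
    (hA : ∀ x : E, (∀ a ∈ I, a • x = 0) → x ∈ A) {n : ℕ} {N : Submodule Γ E}
    (hN : I ^ n • N = ⊥) : IsNoetherian R (N.restrictScalars R) := by
  induction n generalizing N with
  | zero =>
    have hN₀ : N.restrictScalars R = ⊥ := by
      rw [Submodule.pow_zero, Submodule.one_smul] at hN
      simp [hN]
    rw [hN₀]
    infer_instance
  | succ n ih =>
    rw [Submodule.pow_succ, Submodule.mul_smul] at hN
    have := ih hN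
    obtain ⟨s, hs⟩ := hI
    have hmem (a : s) {x : E} (hx : x ∈ N) : (a : Γ) • x ∈ I • N :=
      Submodule.smul_mem_smul (hs ▸ Submodule.subset_span a.2) hx
    let φ : N.restrictScalars R →ₗ[R] s → (I • N).restrictScalars R :=
      LinearMap.pi fun a ↦
        ((Algebra.lsmul R R E (a : Γ)).comp (N.restrictScalars R).subtype).codRestrict _ fun x ↦
          hmem a x.2
    have hker : (LinearMap.ker φ).map (N.restrictScalars R).subtype ≤ A := by
      rintro _ ⟨x, hx, rfl⟩
      have hs₀ : I ≤ LinearMap.ker (LinearMap.toSpanSingleton Γ E x) := by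
        rw [← hs, Submodule.span_le]
        exact fun a ha ↦ congrArg Subtype.val (congrFun hx ⟨a, ha⟩)
      exact hA x fun a ha ↦ hs₀ ha
    have := isNoetherian_of_le hker
    have : IsNoetherian R (LinearMap.ker φ) := isNoetherian_of_linearEquiv
      ((LinearMap.ker φ).equivMapOfInjective _ (N.restrictScalars R).subtype_injective).symm
    exact isNoetherian_of_range_eq_ker (LinearMap.ker φ).subtype φ (by simp)

theorem IsEssentialSubmodule.finite (R : Type*) [CommRing R] [IsArtinianRing R] [Algebra R Γ]
    [Module.Finite R Γ] {L : Submodule Γ E} [Module.Finite Γ L] (hL : IsEssentialSubmodule L) :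
    Module.Finite Γ E := by
  have : IsArtinianRing Γ := .of_finite R Γ
  let := Module.restrictScalars R Γ E
  have : IsScalarTower R Γ E := .restrictScalars R Γ E
  have : Module.Finite R L := .trans Γ L
  have : IsNoetherian R (L.restrictScalars R) := isNoetherian_of_isNoetherianRing_of_finite R L
  obtain ⟨n, hn⟩ := (IsSemiprimaryRing.isNilpotent : IsNilpotent (Ring.jacobson Γ))
  have hsocle (x : E) (hx : ∀ a ∈ Ring.jacobson Γ, a • x = 0) : x ∈ L :=
    have := isSemisimpleModule_span_singleton hx
    hL.le_of_isSemisimpleModule (Submodule.span Γ {x}) (Submodule.mem_span_singleton_self x)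
  have : IsNoetherian R ((⊤ : Submodule Γ E).restrictScalars R) :=
    isNoetherian_of_pow_smul_eq_bot (A := L.restrictScalars R)
      (IsNoetherian.noetherian (Ring.jacobson Γ)) hsocle (n := n) (by simp [hn])
  have : IsNoetherian R E := isNoetherian_top_iff.1 this
  exact Module.Finite.of_restrictScalars_finite R Γ E

end EssentialSubmodule

section ModuleCat

universe u

theorem isFG_le_isNoetherianObject (Γ : Type*) [Ring Γ] [IsNoetherianRing Γ] :
    ModuleCat.isFG Γ ≤ isNoetherianObject := fun M (_ : Module.Finite Γ M) ↦
  (ModuleCat.subobjectModule M).toOrderEmbedding.wellFoundedGT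

theorem isFG_le_isArtinianObject (Γ : Type*) [Ring Γ] [IsArtinianRing Γ] :
    ModuleCat.isFG Γ ≤ isArtinianObject := fun M (_ : Module.Finite Γ M) ↦
  (ModuleCat.subobjectModule M).toOrderEmbedding.wellFoundedLT

instance {Γ : Type*} [Ring Γ] : (ModuleCat.isFG Γ).IsClosedUnderQuotients where
  prop_of_epi f _ h :=
    have : Module.Finite Γ _ := h
    Module.Finite.of_surjective f.hom ((ModuleCat.epi_iff_surjective f).1 inferInstance)

instance {Γ : Type*} [Ring Γ] [IsNoetherianRing Γ] :
    (ModuleCat.isFG Γ).IsClosedUnderSubobjects where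
  prop_of_mono f _ h :=
    have : Module.Finite Γ _ := h
    Module.Finite.of_injective f.hom ((ModuleCat.mono_iff_injective f).1 inferInstance)

instance {Γ : Type*} [Ring Γ] [IsNoetherianRing Γ] :
    (ModuleCat.isFG Γ).IsClosedUnderExtensions where
  prop_X₂_of_shortExact {S} hS h₁ h₃ :=
    have : Module.Finite Γ S.X₁ := h₁
    have : Module.Finite Γ S.X₃ := h₃
    have : IsNoetherian Γ S.X₂ := isNoetherian_of_range_eq_ker S.f.hom S.g.hom
      hS.exact.moduleCat_range_eq_ker
    inferInstanceAs (Module.Finite Γ S.X₂)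

theorem exists_isFG_projective_epi {Γ : Type u} [Ring Γ] (M : ModuleCat.{u} Γ)
    (hM : ModuleCat.isFG Γ M) :
    ∃ P : ModuleCat.{u} Γ, ModuleCat.isFG Γ P ∧ Projective P ∧ ∃ π : P ⟶ M, Epi π := by
  have : Module.Finite Γ M := hM
  obtain ⟨n, π, hπ⟩ := Module.Finite.exists_fin' Γ M
  exact ⟨.of Γ (Fin n → Γ), inferInstanceAs (Module.Finite Γ (Fin n → Γ)), inferInstance,
    ModuleCat.ofHom π, (ModuleCat.epi_iff_surjective _).2 hπ⟩

theorem exists_isFG_injective_mono (R : Type*) [CommRing R] [IsArtinianRing R] {Γ : Type u} [Ring Γ]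
    [Algebra R Γ] [Module.Finite R Γ] (M : ModuleCat.{u} Γ) (hM : ModuleCat.isFG Γ M) :
    ∃ I : ModuleCat.{u} Γ, ModuleCat.isFG Γ I ∧ Injective I ∧ ∃ ι : M ⟶ I, Mono ι := by
  have : Module.Finite Γ M := hM
  have : IsArtinianRing Γ := .of_finite R Γ
  obtain ⟨J, _, ι, _⟩ := EnoughInjectives.presentation M
  have hι : Function.Injective ι.hom := (ModuleCat.mono_iff_injective ι).1 inferInstance
  have : Module.Injective Γ J := Module.injective_module_of_injective_object Γ J
  obtain ⟨C, hC, hess⟩ := exists_disjoint_isEssentialSubmodule_map_mkQ (LinearMap.range ι.hom)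
  have hfin : Module.Finite Γ (J ⧸ C) := hess.finite R
  have := hess.injective_quotient hC
  refine ⟨.of Γ (J ⧸ C), hfin, Module.injective_object_of_injective_module Γ (J ⧸ C),
    ModuleCat.ofHom (C.mkQ ∘ₗ ι.hom), (ModuleCat.mono_iff_injective _).2 ?_⟩
  refine (injective_iff_map_eq_zero _).2 fun x hx ↦ (injective_iff_map_eq_zero ι.hom).1 hι x ?_
  exact Submodule.disjoint_def.1 hC (ι.hom x) ⟨x, rfl⟩ (by simpa using hx)

theorem IsCotorsionPair.isExtOrthogonalPair {Γ : Type} [Ring Γ] {𝒳 𝒴 : Set (ModuleCat Γ)}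
    (h : IsCotorsionPair Γ 𝒳 𝒴) : IsExtOrthogonalPair (ModuleCat.isFG Γ) 𝒳 𝒴 where
  mem_left_iff X := by
    conv_lhs => rw [h.left_eq]
    exact and_congr Iff.rfl
      (forall₂_congr fun Y _ ↦ subsingleton_ext_one_iff_extOrthogonal ℤ X Y)
  mem_right_iff Y := by
    conv_lhs => rw [h.right_eq]
    exact and_congr Iff.rfl
      (forall₂_congr fun X _ ↦ subsingleton_ext_one_iff_extOrthogonal ℤ X Y)

end ModuleCat

theorem hereditary_cotorsion_contravariantlyFinite_iff_covariantlyFinite_general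
    (R : Type) [CommRing R] [IsArtinianRing R]
    (Γ : Type) [Ring Γ] [Algebra R Γ] [Module.Finite R Γ]
    (𝒳 𝒴 : Set (ModuleCat Γ)) (hP : IsCotorsionPair Γ 𝒳 𝒴) :
    (∀ M ∈ fgMod Γ, ∃ (X : ModuleCat Γ) (f : X ⟶ M), IsRightApprox 𝒳 f) ↔
    (∀ M ∈ fgMod Γ, ∃ (Y : ModuleCat Γ) (f : M ⟶ Y), IsLeftApprox 𝒴 f) := by
  have : IsArtinianRing Γ := .of_finite R Γ
  have h := hP.isExtOrthogonalPair
  have hN := isFG_le_isNoetherianObject Γ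
  have hA := isFG_le_isArtinianObject Γ
  have hgen (M : ModuleCat Γ) (hM : ModuleCat.isFG Γ M) : ∃ X ∈ 𝒳, ∃ π : X ⟶ M, Epi π := by
    obtain ⟨X, hX, _, hπ⟩ := exists_isFG_projective_epi M hM
    exact ⟨X, (h.mem_left_iff X).2 ⟨hX, fun _ _ ↦ .of_projective⟩, hπ⟩
  have hcogen (M : ModuleCat Γ) (hM : ModuleCat.isFG Γ M) : ∃ Y ∈ 𝒴, ∃ ι : M ⟶ Y, Mono ι := by
    obtain ⟨Y, hY, _, hι⟩ := exists_isFG_injective_mono R M hM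
    exact ⟨Y, (h.mem_right_iff Y).2 ⟨hY, fun _ _ ↦ .of_injective⟩, hι⟩
  exact ⟨fun H _ ↦ h.exists_isLeftApprox hN hA hgen hcogen H,
    fun H _ ↦ h.exists_isRightApprox hN hA hgen hcogen H⟩

/-- Let `Γ` be an artin algebra and `(𝒳, 𝒴)` a hereditary cotorsion pair
in `Γ`-mod. Then `𝒳` is contravariantly finite (in the finitely generated modules) if and
only if `𝒴` is covariantly finite. -/
theorem hereditary_cotorsion_contravariantlyFinite_iff_covariantlyFinite
    (R : Type) [CommRing R] [IsArtinianRing R]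
    (Γ : Type) [Ring Γ] [Algebra R Γ] [Module.Finite R Γ]
    (𝒳 𝒴 : Set (ModuleCat Γ)) (hP : IsCotorsionPair Γ 𝒳 𝒴)
    (hH : IsHereditaryPair Γ 𝒳 𝒴) :
    (∀ M ∈ fgMod Γ, ∃ (X : ModuleCat Γ) (f : X ⟶ M), IsRightApprox 𝒳 f) ↔
    (∀ M ∈ fgMod Γ, ∃ (Y : ModuleCat Γ) (f : M ⟶ Y), IsLeftApprox 𝒴 f) :=
  hereditary_cotorsion_contravariantlyFinite_iff_covariantlyFinite_general R Γ 𝒳 𝒴 hP
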